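/- arXiv:2603.02189 — 2 statements merged into one kernel-verified Lean document; each statement's English description precedes it below -/
import Mathlib

section
/- Every cuboid is canonically Ramsey. That is, for all positive reals b₁,…,bₛ, letting R = {0,b₁}×⋯×{0,bₛ} ⊆ ℝˢ, there exists a positive integer n such that for every set of colours κ and every colouring χ : ℝⁿ → κ, there is a subset of ℝⁿ congruent to R that is either monochromatic or rainbow under χ. -/
/-- A copy of a configuration `C ⊆ ℝˢ` in `ℝⁿ`: the image of `C` under a
distance-preserving map `ℝˢ → ℝⁿ`. -/
def IsCopy {s n : ℕ} (C : Set (EuclideanSpace ℝ (Fin s)))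
    (X : Set (EuclideanSpace ℝ (Fin n))) : Prop :=
  ∃ f : EuclideanSpace ℝ (Fin s) → EuclideanSpace ℝ (Fin n), Isometry f ∧ X = f '' C

/-- A set `X` is monochromatic under a colouring `χ` if all its points receive
the same colour. -/
def Monochromatic {α κ : Type*} (χ : α → κ) (X : Set α) : Prop :=
  ∀ x ∈ X, ∀ y ∈ X, χ x = χ y

/-- A set `X` is rainbow under a colouring `χ` if all its points receive
pairwise distinct colours. -/
def RainbowSet {α κ : Type*} (χ : α → κ) (X : Set α) : Prop :=
  Set.InjOn χ X

/-- The cuboid `{0, b 0} × ⋯ × {0, b (s-1)} ⊆ ℝˢ`. -/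
def cuboid {s : ℕ} (b : Fin s → ℝ) : Set (EuclideanSpace ℝ (Fin s)) :=
  {x | ∀ i, x i = 0 ∨ x i = b i}

/-- A configuration is canonically Ramsey if some `ℝⁿ` admits, for every colouring
with arbitrarily many colours, a monochromatic or rainbow copy of it. -/
def CanonicallyRamsey {s : ℕ} (C : Set (EuclideanSpace ℝ (Fin s))) : Prop :=
  ∃ n : ℕ, 0 < n ∧ ∀ (κ : Type) (χ : EuclideanSpace ℝ (Fin n) → κ),
    ∃ X : Set (EuclideanSpace ℝ (Fin n)), IsCopy C X ∧ (Monochromatic χ X ∨ RainbowSet χ X)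

/-- A configuration is Ramsey if for every number of colours `r` there is `n` such
that every `r`-colouring of `ℝⁿ` admits a monochromatic copy of it. -/
def IsRamsey {s : ℕ} (C : Set (EuclideanSpace ℝ (Fin s))) : Prop :=
  ∀ r : ℕ, 0 < r → ∃ n : ℕ, ∀ χ : EuclideanSpace ℝ (Fin n) → Fin r,
    ∃ X : Set (EuclideanSpace ℝ (Fin n)), IsCopy C X ∧ Monochromatic χ X

/-- Triangle Ramsey theorem, inside finsets of naturals. -/
lemma triangle_aux {K : Type} [DecidableEq K] (r : ℕ) :
    ∃ N : ℕ, ∀ (f : ℕ → ℕ → K) (C : Finset K) (S : Finset ℕ), C.card ≤ r → N ≤ S.card →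
      (∀ a ∈ S, ∀ b ∈ S, a < b → f a b ∈ C) →
      ∃ a ∈ S, ∃ b ∈ S, ∃ c ∈ S, a < b ∧ b < c ∧ f a b = f a c ∧ f a b = f b c := by
  induction r with
  | zero =>
    refine ⟨2, fun f C S hC hS h => ?_⟩
    obtain ⟨a, ha, b, hb, hab⟩ := Finset.one_lt_card.1 hS
    have hC0 : C = ∅ := Finset.card_eq_zero.1 (by omega)
    subst hC0
    rcases lt_or_gt_of_ne hab with h1 | h1
    · exact absurd (h a ha b hb h1) (by simp)
    · exact absurd (h b hb a ha h1) (by simp)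
  | succ r ih =>
    obtain ⟨N, hN⟩ := ih
    refine ⟨(r + 1) * N + 2, fun f C S hC hS h => ?_⟩
    have hne : S.Nonempty := Finset.card_pos.1 (by omega)
    set a := S.min' hne with ha
    have haS : a ∈ S := S.min'_mem hne
    have hlt : ∀ x ∈ S.erase a, a < x := fun x hx =>
      lt_of_le_of_ne (S.min'_le x (Finset.mem_of_mem_erase hx)) (Finset.ne_of_mem_erase hx).symm
    have hcard : (S.erase a).card = S.card - 1 := Finset.card_erase_of_mem haS
    have hmaps : ∀ x ∈ S.erase a, f a x ∈ C := fun x hx =>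
      h a haS x (Finset.mem_of_mem_erase hx) (hlt x hx)
    have hlt2 : C.card * N < (S.erase a).card := by
      have : C.card * N ≤ (r + 1) * N := Nat.mul_le_mul_right _ hC
      omega
    obtain ⟨k, hk, hkN⟩ := Finset.exists_lt_card_fiber_of_mul_lt_card_of_maps_to hmaps hlt2
    set T := (S.erase a).filter (fun x => f a x = k) with hT
    have hTS : ∀ x ∈ T, x ∈ S ∧ a < x ∧ f a x = k := fun x hx => by
      rw [hT, Finset.mem_filter] at hx
      exact ⟨Finset.mem_of_mem_erase hx.1, hlt x hx.1, hx.2⟩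
    by_cases hex : ∃ b ∈ T, ∃ c ∈ T, b < c ∧ f b c = k
    · obtain ⟨b, hb, c, hc, hbc, hf⟩ := hex
      exact ⟨a, haS, b, (hTS b hb).1, c, (hTS c hc).1, (hTS b hb).2.1, hbc,
        by rw [(hTS b hb).2.2, (hTS c hc).2.2], by rw [(hTS b hb).2.2, hf]⟩
    · push Not at hex
      obtain ⟨x, hx, y, hy, z, hz, hh⟩ := hN f (C.erase k) T
        (by rw [Finset.card_erase_of_mem hk]; omega) hkN.le
        (fun x hx y hy hxy => Finset.mem_erase.2
          ⟨hex x hx y hy hxy, h x (hTS x hx).1 y (hTS y hy).1 hxy⟩)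
      exact ⟨x, (hTS x hx).1, y, (hTS y hy).1, z, (hTS z hz).1, hh⟩

lemma triangle (K : Type) [Finite K] :
    ∃ N : ℕ, ∀ f : ℕ → ℕ → K, ∃ t : Fin 3 → ℕ, StrictMono t ∧ (∀ i, t i < N) ∧
      ∃ k, ∀ u v : Fin 3, u < v → f (t u) (t v) = k := by
  classical
  have := Fintype.ofFinite K
  obtain ⟨N, hN⟩ := triangle_aux (K := K) (Fintype.card K)
  refine ⟨N, fun f => ?_⟩
  obtain ⟨a, ha, b, hb, c, hc, hab, hbc, h1, h2⟩ := hN f Finset.univ (Finset.range N)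
    (by simp) (by simp) (by simp)
  simp only [Finset.mem_range] at ha hb hc
  refine ⟨![a, b, c], ?_, ?_, f a b, ?_⟩
  · intro u v huv
    fin_cases u <;> fin_cases v <;> simp at huv ⊢ <;> omega
  · intro i
    fin_cases i <;> simp <;> omega
  · intro u v huv
    fin_cases u <;> fin_cases v <;> simp at huv ⊢ <;> simp_all

/-- Product Ramsey theorem for pairs. -/
lemma product_pairs (m : ℕ) : ∀ (K : Type) [Finite K],
    ∃ N : ℕ, ∀ F : (Fin m → ℕ) → (Fin m → ℕ) → K,
      ∃ t : Fin m → Fin 3 → ℕ, (∀ j, StrictMono (t j)) ∧ (∀ j i, t j i < N) ∧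
        ∃ k, ∀ u v : Fin m → Fin 3, (∀ j, u j < v j) →
          F (fun j => t j (u j)) (fun j => t j (v j)) = k := by
  induction m with
  | zero =>
    intro K _
    refine ⟨0, fun F => ⟨fun j => j.elim0, fun j => j.elim0, fun j => j.elim0,
      F (fun j => j.elim0) (fun j => j.elim0), fun u v _ => ?_⟩⟩
    congr 1 <;> exact Subsingleton.elim _ _
  | succ m ih =>
    intro K _
    obtain ⟨N, hN⟩ := ih K
    obtain ⟨M, hM⟩ := triangle ((Fin m → Fin N) → (Fin m → Fin N) → K)
    refine ⟨max N M, fun F => ?_⟩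
    obtain ⟨t0, ht0, ht0M, G, hG⟩ := hM (fun a b p q =>
      F (Fin.cons a (fun j => (p j : ℕ))) (Fin.cons b (fun j => (q j : ℕ))))
    obtain ⟨t, ht, htN, k, hk⟩ := hN (fun p q => F (Fin.cons (t0 0) p) (Fin.cons (t0 1) q))
    refine ⟨Fin.cons t0 t, ?_, ?_, k, ?_⟩
    · intro j
      refine Fin.cases ?_ (fun j => ?_) j
      · simpa using ht0
      · simpa using ht j
    · intro j
      refine Fin.cases ?_ (fun j => ?_) j
      · intro i; simpa using Or.inr (ht0M i)
      · intro i; simpa using Or.inl (htN j i)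
    · intro u v huv
      rw [← hk (fun j => u j.succ) (fun j => v j.succ) (fun j => huv _)]
      have e1 := congrFun (congrFun (hG (u 0) (v 0) (huv 0)) (fun j => ⟨_, htN j (u j.succ)⟩))
        (fun j => ⟨_, htN j (v j.succ)⟩)
      have e2 := congrFun (congrFun (hG 0 1 (by decide)) (fun j => ⟨_, htN j (u j.succ)⟩))
        (fun j => ⟨_, htN j (v j.succ)⟩)
      have e3 := e1.trans e2.symm
      have hu : ∀ u : Fin (m + 1) → Fin 3,
          (fun j => (Fin.cons t0 t : Fin (m + 1) → Fin 3 → ℕ) j (u j)) =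
          (Fin.cons (t0 (u 0)) (fun j => t j (u j.succ)) : Fin (m + 1) → ℕ) := by
        intro u
        funext j
        refine Fin.cases ?_ (fun j => ?_) j <;> simp
      rw [hu u, hu v]
      exact e3

/-- Canonical Ramsey theorem for products. -/
lemma canonical_fin (m : ℕ) : ∃ N : ℕ, ∀ (κ : Type) (c : (Fin m → ℕ) → κ),
    ∃ p q : Fin m → ℕ, (∀ j, p j < q j) ∧ (∀ j, q j < N) ∧ ∃ I : Set (Fin m),
      ∀ x y : Fin m → Prop,
        (c (fun j => open Classical in if x j then q j else p j) =
          c (fun j => open Classical in if y j then q j else p j)) ↔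
        ∀ j ∈ I, (x j ↔ y j) := by
  classical
  obtain ⟨N, hN⟩ := product_pairs m ((Fin m → Bool) → (Fin m → Bool) → Prop)
  refine ⟨N, fun κ c => ?_⟩
  obtain ⟨t, ht, htN, E, hE⟩ := hN (fun p q x y =>
    c (fun j => if x j then q j else p j) = c (fun j => if y j then q j else p j))
  set C : (Fin m → Fin 3) → κ := fun g => c (fun j => t j (g j)) with hC
  have hE' : ∀ (u v : Fin m → Fin 3), (∀ j, u j < v j) → ∀ x y : Fin m → Bool,
      (C (fun j => if x j then v j else u j) = C (fun j => if y j then v j else u j)) = E x y := by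
    intro u v huv x y
    rw [← hE u v huv]
    simp only [hC]
    congr! 4 <;> split_ifs <;> rfl
  -- equality of colours through representations
  have rep : ∀ g h g' h' : Fin m → Fin 3,
      (∀ j, ∃ u v u' v' : Fin 3, ∃ x y : Bool, u < v ∧ u' < v' ∧ g j = (if x then v else u) ∧
        h j = (if y then v else u) ∧ g' j = (if x then v' else u') ∧
        h' j = (if y then v' else u')) → (C g = C h ↔ C g' = C h') := by
    intro g h g' h' H
    choose u v u' v' x y h1 h2 h3 h4 h5 h6 using H
    rw [funext h3, funext h4, funext h5, funext h6, hE' u v h1, hE' u' v' h2]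
  have key : ∀ g h g' h' : Fin m → Fin 3,
      (∀ j, (g j < h j ↔ g' j < h' j) ∧ (h j < g j ↔ h' j < g' j)) →
      (C g = C h ↔ C g' = C h') := by
    intro g h g' h' H
    have mid : ∀ g h : Fin m → Fin 3, (C g = C h ↔
        C (fun j => if g j = h j then 1 else g j) = C (fun j => if g j = h j then 1 else h j)) := by
      intro g h
      apply rep
      intro j
      generalize g j = a
      generalize h j = b
      revert a b
      decide
    rw [mid g h, mid g' h']
    apply rep
    intro j
    have := H j
    revert this
    generalize g j = a
    generalize h j = b
    generalize g' j = a'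
    generalize h' j = b'
    revert a b a' b'
    decide
  set I : Set (Fin m) := {j | ¬ ∀ g v, C (Function.update g j v) = C g} with hI
  have claimA' : ∀ g h j, C g = C h → g j < h j → ∀ k v, C (Function.update k j v) = C k := by
    intro g h j hgh hj
    have e1 : C (Function.update g j 0) = C (Function.update h j 1) := by
      refine (key g h _ _ fun i => ?_).1 hgh
      by_cases hi : i = j
      · subst hi; simp [hj, hj.le]
      · simp [hi]
    have e2 : C (Function.update g j 0) = C (Function.update h j 2) := by
      refine (key g h _ _ fun i => ?_).1 hgh
      by_cases hi : i = j
      · subst hi; simp [hj, hj.le]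
      · simp [hi]
    have e3 := e1.symm.trans e2
    intro k v
    rcases lt_trichotomy (k j) v with hv | hv | hv
    · refine ((key _ _ _ _ fun i => ?_).1 e3).symm
      by_cases hi : i = j
      · subst hi; simp [hv, hv.le]
      · simp [hi]
    · subst hv; simp
    · refine (key _ _ _ _ fun i => ?_).1 e3
      by_cases hi : i = j
      · subst hi; simp [hv, hv.le]
      · simp [hi]
  have claimA : ∀ g h, C g = C h → ∀ j ∈ I, g j = h j := by
    intro g h hgh j hj
    by_contra hne
    rcases lt_or_gt_of_ne hne with h1 | h1
    · exact hj (claimA' g h j hgh h1)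
    · exact hj (claimA' h g j hgh.symm h1)
  have claimB : ∀ g h, (∀ j ∈ I, g j = h j) → C g = C h := by
    intro g h hgh
    have : ∀ S : Finset (Fin m), C (S.piecewise h g) = C g := by
      intro S
      induction S using Finset.induction_on with
      | empty => simp
      | insert a S ha ih =>
        rw [Finset.piecewise_insert]
        by_cases haI : a ∈ I
        · rw [← hgh a haI]
          have : Function.update (S.piecewise h g) a (g a) = S.piecewise h g := by
            rw [Function.update_eq_self_iff]; simp [ha]
          rw [this, ih]
        · have : ∀ g v, C (Function.update g a v) = C g := by
            simpa [hI] using haI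
          rw [this, ih]
    have h2 := this Finset.univ
    rw [Finset.piecewise_univ] at h2
    exact h2.symm
  refine ⟨fun j => t j 0, fun j => t j 1, fun j => ht j (by decide), fun j => htN j 1, I, ?_⟩
  intro x y
  have conv : ∀ x : Fin m → Prop, (c fun j => if x j then t j 1 else t j 0) =
      C (fun j => if x j then 1 else 0) := by
    intro x
    simp only [hC]
    congr! 2
    split_ifs <;> rfl
  rw [conv, conv]
  have hiff : ∀ j, ((if x j then (1 : Fin 3) else 0) = (if y j then 1 else 0)) ↔ (x j ↔ y j) := by
    intro j
    by_cases h1 : x j <;> by_cases h2 : y j <;> simp [h1, h2]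
  constructor
  · intro h j hj
    exact (hiff j).1 (claimA _ _ h j hj)
  · intro h
    exact claimB _ _ fun j hj => (hiff j).2 (h j hj)

lemma canonical (J : Type) [Finite J] : ∃ N : ℕ, ∀ (κ : Type) (c : (J → ℕ) → κ),
    ∃ p q : J → ℕ, (∀ j, p j < q j) ∧ (∀ j, q j < N) ∧ ∃ I : Set J,
      ∀ x y : J → Prop,
        (c (fun j => open Classical in if x j then q j else p j) =
          c (fun j => open Classical in if y j then q j else p j)) ↔
        ∀ j ∈ I, (x j ↔ y j) := by
  obtain ⟨m, ⟨e⟩⟩ := Finite.exists_equiv_fin J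
  obtain ⟨N, hN⟩ := canonical_fin m
  refine ⟨N, fun κ c => ?_⟩
  obtain ⟨p, q, hpq, hq, I, h⟩ := hN κ (fun g => c (g ∘ e))
  refine ⟨p ∘ e, q ∘ e, fun j => hpq _, fun j => hq _, e ⁻¹' I, fun x y => ?_⟩
  have := h (x ∘ e.symm) (y ∘ e.symm)
  simp only [Function.comp_def, Equiv.symm_apply_apply] at this
  have hite : ∀ x : J → Prop,
      (fun j => open Classical in if x (e.symm (e j)) then q (e j) else p (e j)) =
      (fun j => open Classical in if x j then q (e j) else p (e j)) := fun x => by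
    funext j
    congr 1
    rw [Equiv.symm_apply_apply]
  rw [hite x, hite y] at this
  refine this.trans ⟨fun H j hj => by simpa using H (e j) hj, fun H j hj => ?_⟩
  exact H (e.symm j) (by simpa using hj)

/-- Geometric realisation: a product of regular simplices with edge lengths `l j`. -/
lemma geometry {s : ℕ} (b : Fin s → ℝ) (hb : ∀ i, 0 < b i) (J : Type) [Fintype J] [Nonempty J]
    (l : J → ℝ)
    (H : ∀ I : Set J, ∃ S : J → Option (Fin s),
      (∀ i, (∑ j, if S j = some i then l j ^ 2 else 0) = b i ^ 2) ∧
      ((∀ j ∈ I, S j = none) ∨ (∀ i, ∃ j ∈ I, S j = some i))) :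
    CanonicallyRamsey (cuboid b) := by
  classical
  obtain ⟨N, hN⟩ := canonical J
  obtain ⟨e⟩ : Nonempty (J × Fin (N + 1) ≃ Fin (Fintype.card (J × Fin (N + 1)))) :=
    ⟨Fintype.equivFin _⟩
  refine ⟨Fintype.card (J × Fin (N + 1)), Fintype.card_pos, fun κ χ => ?_⟩
  obtain ⟨p, q, hpq, hq, I, hI⟩ := hN κ (fun g => χ (WithLp.toLp 2 fun t =>
    if g (e.symm t).1 = (e.symm t).2 then l (e.symm t).1 / √2 else 0))
  obtain ⟨S, hS, hor⟩ := H I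
  -- the parameter of coordinate `j`
  let w : EuclideanSpace ℝ (Fin s) → J → ℝ := fun x j => (S j).elim 0 (fun i => x i / b i)
  let f : EuclideanSpace ℝ (Fin s) → EuclideanSpace ℝ (Fin (Fintype.card (J × Fin (N + 1)))) :=
    fun x => WithLp.toLp 2 fun t =>
      l (e.symm t).1 / √2 *
        ((1 - w x (e.symm t).1) * (if p (e.symm t).1 = (e.symm t).2 then 1 else 0)
          + w x (e.symm t).1 * (if q (e.symm t).1 = (e.symm t).2 then 1 else 0))
  have hf : Isometry f := by
    apply Isometry.of_dist_eq
    intro x y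
    rw [EuclideanSpace.dist_eq, EuclideanSpace.dist_eq]
    congr 1
    simp only [Real.dist_eq, sq_abs]
    rw [← Equiv.sum_comp e, Fintype.sum_prod_type]
    have h1 : ∀ j : J, (∑ a : Fin (N + 1), (f x (e (j, a)) - f y (e (j, a))) ^ 2) =
        l j ^ 2 * (w x j - w y j) ^ 2 := by
      intro j
      have hp1 : p j < N + 1 := by have := hpq j; have := hq j; omega
      have hq1 : q j < N + 1 := by have := hq j; omega
      have h2 : ∀ a : Fin (N + 1), (f x (e (j, a)) - f y (e (j, a))) ^ 2 =
          (if a = ⟨p j, hp1⟩ then l j ^ 2 / 2 * (w x j - w y j) ^ 2 else 0) +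
          (if a = ⟨q j, hq1⟩ then l j ^ 2 / 2 * (w x j - w y j) ^ 2 else 0) := by
        intro a
        have hne := (hpq j).ne
        have hs2 : (√2 : ℝ) ^ 2 = 2 := Real.sq_sqrt (by norm_num)
        have hsq : (l j / √2) ^ 2 = l j ^ 2 / 2 := by rw [div_pow, hs2]
        simp only [f, Equiv.symm_apply_apply, Fin.ext_iff, @eq_comm _ (a : ℕ)]
        by_cases ha : p j = a
        · have hqa : q j ≠ a := by omega
          simp only [ha, hqa, if_true, if_false]
          rw [← hsq]; ring
        · by_cases hqa : q j = a
          · simp only [ha, hqa, if_true, if_false]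
            rw [← hsq]; ring
          · simp only [ha, hqa, if_false]; ring
      rw [Finset.sum_congr rfl fun a _ => h2 a, Finset.sum_add_distrib]
      simp only [Finset.sum_ite_eq', Finset.mem_univ, if_true]
      ring
    rw [Finset.sum_congr rfl fun j _ => h1 j]
    have h3 : ∀ j, l j ^ 2 * (w x j - w y j) ^ 2 =
        ∑ i, (if S j = some i then l j ^ 2 else 0) * ((x i - y i) ^ 2 / b i ^ 2) := by
      intro j
      rcases hj : S j with _ | i
      · simp [w, hj]
      · simp only [w, hj, Option.elim, Option.some.injEq, ite_mul, zero_mul,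
          Finset.sum_ite_eq, Finset.mem_univ, if_true]
        rw [← sub_div, div_pow]
    rw [Finset.sum_congr rfl fun j _ => h3 j, Finset.sum_comm]
    refine Finset.sum_congr rfl fun i _ => ?_
    rw [← Finset.sum_mul, hS i]
    have := (hb i).ne'
    field_simp
  obtain ⟨z, hzd⟩ : ∃ z : EuclideanSpace ℝ (Fin s) → J → Prop,
      ∀ x j, z x j ↔ ∃ i, S j = some i ∧ x i = b i := ⟨_, fun _ _ => Iff.rfl⟩
  have hfz : ∀ x ∈ cuboid b, f x = WithLp.toLp 2 fun t =>
      if (if z x (e.symm t).1 then q (e.symm t).1 else p (e.symm t).1) = (e.symm t).2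
        then l (e.symm t).1 / √2 else 0 := by
    intro x hx
    simp only [f]
    congr 1
    funext t
    generalize (e.symm t).1 = j
    have hw : w x j = if z x j then 1 else 0 := by
      rcases Option.eq_none_or_eq_some (S j) with hj | ⟨i, hj⟩
      · simp [w, hzd, hj]
      · have := (hb i).ne'
        rcases hx i with h0 | h0
        · simp [w, hzd, hj, h0, this.symm]
        · simp [w, hzd, hj, h0, this]
    rw [hw]
    by_cases hz : z x j
    · simp [hz]
    · simp [hz]
  have hcol : ∀ x ∈ cuboid b, ∀ y ∈ cuboid b, (χ (f x) = χ (f y) ↔ ∀ j ∈ I, (z x j ↔ z y j)) := by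
    intro x hx y hy
    rw [hfz x hx, hfz y hy, ← hI (z x) (z y)]
  refine ⟨f '' cuboid b, ⟨f, hf, rfl⟩, ?_⟩
  rcases hor with h | h
  · left
    rintro _ ⟨x, hx, rfl⟩ _ ⟨y, hy, rfl⟩
    rw [hcol x hx y hy]
    intro j hj
    simp [hzd, h j hj]
  · right
    rintro _ ⟨x, hx, rfl⟩ _ ⟨y, hy, rfl⟩ hxy
    rw [hcol x hx y hy] at hxy
    congr 1
    ext i
    obtain ⟨j, hj, hji⟩ := h i
    have := hxy j hj
    simp only [hzd, hji, Option.some.injEq, exists_eq_left'] at this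
    rcases hx i with h1 | h1 <;> rcases hy i with h2 | h2
    · rw [h1, h2]
    · rw [this.2 h2, h2]
    · rw [h1, this.1 h1]
    · rw [h1, h2]

/-- **Every cuboid is canonically Ramsey.** For all positive reals `b₁, …, bₛ`,
the cuboid `R = {0,b₁} × ⋯ × {0,bₛ} ⊆ ℝˢ` is canonically Ramsey: there is a
positive integer `n` such that every colouring of `ℝⁿ`, with any set of colours,
admits a subset congruent to `R` which is monochromatic or rainbow. -/
theorem cuboid_canonicallyRamsey (s : ℕ) (hs : 0 < s) (b : Fin s → ℝ)
    (hb : ∀ i, 0 < b i) :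
    CanonicallyRamsey (cuboid b) := by
  classical
  obtain ⟨k, hk0, hk⟩ : ∃ k : ℕ, 0 < k ∧ ∀ i i', b i ^ 2 / k ≤ b i' ^ 2 := by
    choose K hK using fun ii : Fin s × Fin s => exists_nat_ge (b ii.1 ^ 2 / b ii.2 ^ 2)
    refine ⟨∑ ii, K ii + 1, by omega, fun i i' => ?_⟩
    have h1 : K (i, i') ≤ ∑ ii, K ii + 1 :=
      (Finset.single_le_sum (f := K) (fun _ _ => Nat.zero_le _) (Finset.mem_univ (i, i'))).trans
        (Nat.le_succ _)
    have h2 : b i ^ 2 / b i' ^ 2 ≤ ((∑ ii, K ii + 1 : ℕ) : ℝ) :=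
      (hK (i, i')).trans (by exact_mod_cast h1)
    have h3 : (0 : ℝ) < ((∑ ii, K ii + 1 : ℕ) : ℝ) := by positivity
    have h4 : 0 < b i' ^ 2 := pow_pos (hb i') 2
    rw [div_le_iff₀ h4] at h2
    rw [div_le_iff₀ h3]
    linarith
  have : NeZero s := ⟨hs.ne'⟩
  have hkR : (0 : ℝ) < k := by exact_mod_cast hk0
  let J := (Fin s × Fin k × Fin s) ⊕ (Fin s × Fin s)
  have : Nonempty J := ⟨Sum.inr (0, 0)⟩
  let l : J → ℝ := Sum.elim (fun x => √(b x.1 ^ 2 / k)) (fun x => √(b x.2 ^ 2 - b x.1 ^ 2 / k))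
  have hl1 : ∀ x, l (Sum.inl x) ^ 2 = b x.1 ^ 2 / k := fun x => Real.sq_sqrt (by positivity)
  have hl2 : ∀ x, l (Sum.inr x) ^ 2 = b x.2 ^ 2 - b x.1 ^ 2 / k := fun x =>
    Real.sq_sqrt (sub_nonneg.2 (hk _ _))
  refine geometry b hb J l fun I => ?_
  by_cases hI : ∃ i a, ∀ i', (Sum.inl (i, a, i') : J) ∈ I
  · obtain ⟨i₀, a₀, h⟩ := hI
    refine ⟨Sum.elim (fun x => if x.1 = i₀ ∧ x.2.1 = a₀ then some x.2.2 else none)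
      (fun x => if x.1 = i₀ then some x.2 else none), fun i => ?_, Or.inr fun i => ?_⟩
    · rw [Fintype.sum_sum_type]
      have e1 : (∑ x : Fin s × Fin k × Fin s, if (Sum.elim
          (fun x : Fin s × Fin k × Fin s => if x.1 = i₀ ∧ x.2.1 = a₀ then some x.2.2 else none)
          (fun x : Fin s × Fin s => if x.1 = i₀ then some x.2 else none)) (Sum.inl x) = some i
          then l (Sum.inl x) ^ 2 else 0) = b i₀ ^ 2 / k := by
        rw [Finset.sum_eq_single (i₀, a₀, i)]
        · simp [hl1]
        · rintro ⟨x, y, z⟩ _ hne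
          rw [if_neg]
          intro hh
          simp only [Sum.elim_inl] at hh
          split_ifs at hh with hc
          simp_all
        · simp
      have e2 : (∑ x : Fin s × Fin s, if (Sum.elim
          (fun x : Fin s × Fin k × Fin s => if x.1 = i₀ ∧ x.2.1 = a₀ then some x.2.2 else none)
          (fun x : Fin s × Fin s => if x.1 = i₀ then some x.2 else none)) (Sum.inr x) = some i
          then l (Sum.inr x) ^ 2 else 0) = b i ^ 2 - b i₀ ^ 2 / k := by
        rw [Finset.sum_eq_single (i₀, i)]
        · simp [hl2]
        · rintro ⟨x, y⟩ _ hne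
          rw [if_neg]
          intro hh
          simp only [Sum.elim_inr] at hh
          split_ifs at hh with hc
          simp_all
        · simp
      rw [e1, e2]
      ring
    · exact ⟨_, h i, by simp⟩
  · push Not at hI
    choose d hd using hI
    refine ⟨Sum.elim (fun x => if x.2.2 = d x.1 x.2.1 then some x.1 else none)
      (fun x => none), fun i => ?_, Or.inl ?_⟩
    · rw [Fintype.sum_sum_type, Fintype.sum_prod_type, Finset.sum_eq_single i]
      · rw [Fintype.sum_prod_type]
        have : ∀ a : Fin k, (∑ y : Fin s, if (Sum.elim
            (fun x : Fin s × Fin k × Fin s => if x.2.2 = d x.1 x.2.1 then some x.1 else none)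
            (fun x : Fin s × Fin s => none)) (Sum.inl (i, a, y)) = some i
            then l (Sum.inl (i, a, y)) ^ 2 else 0) = b i ^ 2 / k := by
          intro a
          rw [Finset.sum_eq_single (d i a)]
          · simp [hl1]
          · intro y _ hy
            simp [hy]
          · simp
        rw [Finset.sum_congr rfl fun a _ => this a]
        simp
        field_simp
      · intro i' _ hne
        refine Finset.sum_eq_zero fun y _ => ?_
        rw [if_neg]
        simp [hne]
      · simp
    · rintro (⟨i, a, y⟩ | x) hj
      · have : y ≠ d i a := by
          rintro rfl
          exact hd _ _ hj
        simp [this]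
      · simp
end

section
/- For all positive reals b₁,…,bₙ, the right-angled simplex with vertex set {0, b₁e₁, …, bₙeₙ} ⊆ ℝⁿ (where e₁,…,eₙ is the standard basis and 0 is the origin) is canonically Ramsey: there exists N such that every colouring of ℝᴺ (with arbitrarily many colours) admits a subset congruent to {0, b₁e₁, …, bₙeₙ} that is either monochromatic or rainbow. -/
/-- Multicolour Ramsey theorem for monochromatic triangles. -/
lemma tri_aux (k : ℕ) : ∃ m : ℕ, ∀ (C α : Type) [LinearOrder α] (S : Finset C) (V : Finset α)
    (f : α → α → C), S.card ≤ k → m ≤ V.card →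
    (∀ x ∈ V, ∀ y ∈ V, x < y → f x y ∈ S) →
    ∃ x y z : α, x < y ∧ y < z ∧ f x z = f x y ∧ f y z = f x y := by
  classical
  induction k with
  | zero =>
    refine ⟨2, ?_⟩
    intro C α _ S V f hS hV hf
    obtain ⟨x, hx, y, hy, hxy⟩ := Finset.one_lt_card.mp (by omega : 1 < V.card)
    have hS0 : S = ∅ := Finset.card_eq_zero.mp (by omega)
    rcases lt_or_gt_of_ne hxy with h | h
    · have := hf x hx y hy h
      simp [hS0] at this
    · have := hf y hy x hx h
      simp [hS0] at this
  | succ k ih =>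
    obtain ⟨m, hm⟩ := ih
    refine ⟨(k + 1) * m + 2, ?_⟩
    intro C α _ S V f hS hV hf
    have hne : V.Nonempty := Finset.card_pos.mp (by omega)
    set x := V.min' hne with hx
    have hxV : x ∈ V := Finset.min'_mem V hne
    have hlt : ∀ y ∈ V.erase x, x < y := by
      intro y hy
      exact Finset.min'_lt_of_mem_erase_min' V hne hy
    have hcard : (V.erase x).card = V.card - 1 := Finset.card_erase_of_mem hxV
    have hmul : S.card * m ≤ (k + 1) * m := Nat.mul_le_mul_right m hS
    obtain ⟨c, hc, hfib⟩ := Finset.exists_lt_card_fiber_of_mul_lt_card_of_maps_to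
      (s := V.erase x) (t := S) (f := fun y => f x y) (n := m)
      (fun y hy => hf x hxV y (Finset.mem_of_mem_erase hy) (hlt y hy)) (by omega)
    set W := (V.erase x).filter (fun y => f x y = c) with hW
    have hWm : ∀ y ∈ W, y ∈ V ∧ x < y ∧ f x y = c := by
      intro y hy
      rw [hW, Finset.mem_filter] at hy
      exact ⟨Finset.mem_of_mem_erase hy.1, hlt y hy.1, hy.2⟩
    by_cases h : ∃ y ∈ W, ∃ z ∈ W, y < z ∧ f y z = c
    · obtain ⟨y, hy, z, hz, hyz, hfc⟩ := h
      refine ⟨x, y, z, (hWm y hy).2.1, hyz, ?_, ?_⟩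
      · rw [(hWm y hy).2.2, (hWm z hz).2.2]
      · rw [(hWm y hy).2.2, hfc]
    · push Not at h
      refine hm C α (S.erase c) W f ?_ hfib.le ?_
      · rw [Finset.card_erase_of_mem hc]
        omega
      · intro y hy z hz hyz
        exact Finset.mem_erase.mpr ⟨h y hy z hz hyz, hf y (hWm y hy).1 z (hWm z hz).1 hyz⟩

lemma tri (C : Type) [Finite C] : ∃ m : ℕ, ∀ f : Fin m → Fin m → C,
    ∃ t : Fin 3 → Fin m, StrictMono t ∧ ∃ E, ∀ p q : Fin 3, p < q → f (t p) (t q) = E := by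
  classical
  have := Fintype.ofFinite C
  obtain ⟨m, hm⟩ := tri_aux (Fintype.card C)
  refine ⟨m, fun f => ?_⟩
  obtain ⟨x, y, z, hxy, hyz, h1, h2⟩ := hm C (Fin m) Finset.univ Finset.univ f
    (by simp) (by simp) (by simp)
  refine ⟨![x, y, z], ?_, f x y, ?_⟩
  · rw [Fin.strictMono_iff_lt_succ]
    intro i
    fin_cases i
    · simpa using hxy
    · simpa using hyz
  · intro p q hpq
    clear hm
    fin_cases p <;> fin_cases q <;> first | exact rfl | exact h1 | exact h2 | exact absurd hpq (by decide)

/-- Product Ramsey theorem for pairs, with target size three. -/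
lemma prodRamsey (d : ℕ) : ∀ (C : Type) [Finite C], ∃ m : ℕ,
    ∀ f : (Fin d → Fin m) → (Fin d → Fin m) → C,
    ∃ t : Fin d → Fin 3 → Fin m, (∀ i, StrictMono (t i)) ∧ ∃ E,
      ∀ p q : Fin d → Fin 3, (∀ i, p i < q i) →
        f (fun i => t i (p i)) (fun i => t i (q i)) = E := by
  induction d with
  | zero =>
    intro C _
    refine ⟨0, fun f => ⟨fun i => i.elim0, fun i => i.elim0, f (fun i => i.elim0) (fun i => i.elim0), ?_⟩⟩
    intro p q _
    congr 1 <;> exact Subsingleton.elim _ _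
  | succ d ih =>
    intro C _
    obtain ⟨m₁, h₁⟩ := ih C
    obtain ⟨m₂, h₂⟩ := tri ((Fin d → Fin m₁) → (Fin d → Fin m₁) → C)
    refine ⟨max m₁ m₂, fun f => ?_⟩
    let c₁ : Fin m₁ → Fin (max m₁ m₂) := Fin.castLE (le_max_left _ _)
    let c₂ : Fin m₂ → Fin (max m₁ m₂) := Fin.castLE (le_max_right _ _)
    have hc₁ : StrictMono c₁ := Fin.strictMono_castLE _
    have hc₂ : StrictMono c₂ := Fin.strictMono_castLE _
    obtain ⟨t₂, ht₂, F, hF⟩ := h₂ (fun a b X Y =>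
      f (Fin.cons (c₂ a) (fun i => c₁ (X i))) (Fin.cons (c₂ b) (fun i => c₁ (Y i))))
    obtain ⟨t₁, ht₁, E, hE⟩ := h₁ F
    refine ⟨Fin.cons (fun a => c₂ (t₂ a)) (fun i a => c₁ (t₁ i a)), ?_, E, ?_⟩
    · intro i
      refine Fin.cases ?_ (fun j => ?_) i
      · exact hc₂.comp ht₂
      · exact hc₁.comp (ht₁ j)
    · intro p q hpq
      rw [← hE (fun i => p i.succ) (fun i => q i.succ) (fun i => hpq _), ← hF (p 0) (q 0) (hpq 0)]
      congr 1
      · funext i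
        refine Fin.cases ?_ (fun j => ?_) i <;> simp
      · funext i
        refine Fin.cases ?_ (fun j => ?_) i <;> simp

lemma prodRamsey' (ι : Type) [Fintype ι] (C : Type) [Finite C] : ∃ m : ℕ,
    ∀ f : (ι → Fin m) → (ι → Fin m) → C,
    ∃ t : ι → Fin 3 → Fin m, (∀ i, StrictMono (t i)) ∧ ∃ E,
      ∀ p q : ι → Fin 3, (∀ i, p i < q i) →
        f (fun i => t i (p i)) (fun i => t i (q i)) = E := by
  let e := Fintype.equivFin ι
  obtain ⟨m, hm⟩ := prodRamsey (Fintype.card ι) C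
  refine ⟨m, fun f => ?_⟩
  obtain ⟨t, ht, E, hE⟩ := hm (fun X Y => f (fun i => X (e i)) (fun i => Y (e i)))
  refine ⟨fun i => t (e i), fun i => ht _, E, fun p q hpq => ?_⟩
  have := hE (fun j => p (e.symm j)) (fun j => q (e.symm j)) (fun j => hpq _)
  simpa using this

/-- The vertex of the cube spanned by `a`, `b` selected by `u`. -/
def mixPt {ι β : Type} [DecidableEq ι] (a b : ι → β) (u : Finset ι) : ι → β :=
  fun i => if i ∈ u then b i else a i

/-- Canonical Ramsey theorem for products: there is a subcube on which the colouring is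
canonical. -/
lemma canonCube (ι : Type) [Fintype ι] [DecidableEq ι] : ∃ m : ℕ, ∀ (κ : Type)
    (χ : (ι → Fin m) → κ), ∃ a b : ι → Fin m, (∀ i, a i ≠ b i) ∧ ∃ J : Set ι,
      ∀ u v : Finset ι, χ (mixPt a b u) = χ (mixPt a b v) ↔ ∀ i ∈ J, (i ∈ u ↔ i ∈ v) := by
  classical
  obtain ⟨m, hm⟩ := prodRamsey' ι (Finset ι → Finset ι → Prop)
  refine ⟨m, fun κ χ => ?_⟩
  obtain ⟨t, ht, E, hE⟩ := hm (fun x y u v => χ (mixPt x y u) = χ (mixPt x y v))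
  let X : (ι → Fin 3) → κ := fun w => χ (fun i => t i (w i))
  have hX : ∀ (p q : ι → Fin 3), (∀ i, p i < q i) → ∀ u v,
      (X (mixPt p q u) = X (mixPt p q v) ↔ E u v) := by
    intro p q hpq u v
    rw [← hE p q hpq]
    have : ∀ w, (fun i => t i (mixPt p q w i)) =
        mixPt (fun i => t i (p i)) (fun i => t i (q i)) w := by
      intro w
      funext i
      unfold mixPt
      split_ifs <;> rfl
    simp only [X, this]
  let J : Set ι := {i | X (Function.update (fun _ => 1) i 0) ≠ X (fun _ => 1)}
  -- flipping a coordinate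
  have hD : ∀ i u, i ∉ u → (E u (insert i u) ↔ i ∉ J) := by
    intro i u hi
    have h := hX (fun j => if j = i then 0 else if j ∈ u then 0 else 1)
      (fun j => if j = i then 1 else if j ∈ u then 1 else 2)
      (by intro j; split_ifs <;> decide) u (insert i u)
    rw [← h]
    have e1 : mixPt (fun j => if j = i then 0 else if j ∈ u then 0 else 1)
      (fun j => if j = i then 1 else if j ∈ u then 1 else 2) u
        = Function.update (fun _ => (1 : Fin 3)) i 0 := by
      funext j
      by_cases hj : j = i
      · subst hj; simp [mixPt, hi]
      · by_cases hju : j ∈ u <;> simp [mixPt, hj, hju]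
    have e2 : mixPt (fun j => if j = i then 0 else if j ∈ u then 0 else 1)
      (fun j => if j = i then 1 else if j ∈ u then 1 else 2) (insert i u)
        = (fun _ => (1 : Fin 3)) := by
      funext j
      by_cases hj : j = i
      · subst hj; simp [mixPt]
      · by_cases hju : j ∈ u <;> simp [mixPt, hj, hju]
    rw [e1, e2]
    simp [J]
  -- separated vertices
  have hsep : ∀ i u v, i ∉ u → i ∈ v → E u v → i ∉ J := by
    intro i u v hu hv huv
    rw [← hD i (v.erase i) (by simp), Finset.insert_erase hv]
    have h01 := (hX (fun _ => 0) (fun _ => 1) (by intro j; simp) u v).mpr huv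
    have h02 := (hX (fun _ => 0) (fun j => if j = i then 2 else 1)
      (by intro j; split_ifs <;> decide) u v).mpr huv
    rw [← hX (fun j => if j = i then 1 else 0) (fun j => if j = i then 2 else 1)
      (by intro j; split_ifs <;> decide)]
    have e0 : mixPt (fun _ => (0 : Fin 3)) (fun j => if j = i then 2 else 1) u
        = mixPt (fun _ => 0) (fun _ => 1) u := by
      funext j
      by_cases hj : j = i
      · subst hj; simp [mixPt, hu]
      · simp [mixPt, hj]
    have e1 : mixPt (fun j => if j = i then (1 : Fin 3) else 0) (fun j => if j = i then 2 else 1)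
        (v.erase i) = mixPt (fun _ => 0) (fun _ => 1) v := by
      funext j
      by_cases hj : j = i
      · subst hj; simp [mixPt, hv]
      · simp [mixPt, hj]
    have e2 : mixPt (fun j => if j = i then (1 : Fin 3) else 0) (fun j => if j = i then 2 else 1)
        v = mixPt (fun _ => 0) (fun j => if j = i then 2 else 1) v := by
      funext j
      by_cases hj : j = i
      · subst hj; simp [mixPt, hv]
      · simp [mixPt, hj]
    rw [e1, e2, ← h01, ← h02, e0]
  have hX01 := hX (fun _ => 0) (fun _ => 1) (by intro j; simp)
  refine ⟨fun i => t i 0, fun i => t i 1, fun i => ((ht i) (by decide)).ne, J, fun u v => ?_⟩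
  have hfin : χ (mixPt (fun i => t i 0) (fun i => t i 1) u) =
      χ (mixPt (fun i => t i 0) (fun i => t i 1) v) ↔ E u v := by
    rw [← hE (fun _ => 0) (fun _ => 1) (by intro j; simp)]
  rw [hfin]
  have hsymm : ∀ u v, E u v → E v u := by
    intro u v h
    rw [← hX01] at h ⊢
    exact h.symm
  constructor
  · intro h i hi
    constructor
    · intro hu
      by_contra hv
      exact hsep i v u hv hu (hsymm _ _ h) hi
    · intro hv
      by_contra hu
      exact hsep i u v hu hv h hi
  · intro h
    have hadd : ∀ (w T : Finset ι), (∀ i ∈ T, i ∉ J) → E w (w ∪ T) := by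
      intro w T
      induction T using Finset.induction_on with
      | empty => intro _; rw [← hX01]; simp
      | insert i T hi ih =>
        intro hT
        have h1 := ih (fun j hj => hT j (Finset.mem_insert_of_mem hj))
        by_cases hiw : i ∈ w ∪ T
        · rwa [Finset.union_insert, Finset.insert_eq_of_mem hiw]
        · have h2 := (hD i _ hiw).mpr (hT i (Finset.mem_insert_self _ _))
          rw [Finset.union_insert]
          rw [← hX01] at h1 h2 ⊢
          exact h1.trans h2
    have h1 := hadd (u ∩ v) (u \ v) (by
      intro i hi hJ
      have := h i hJ
      simp at hi
      tauto)
    have h2 := hadd (u ∩ v) (v \ u) (by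
      intro i hi hJ
      have := h i hJ
      simp at hi
      tauto)
    have e1 : (u ∩ v) ∪ (u \ v) = u := by ext i; simp; tauto
    have e2 : (u ∩ v) ∪ (v \ u) = v := by ext i; simp; tauto
    rw [e1, ← hX01] at h1
    rw [e2, ← hX01] at h2
    rw [← hX01]
    exact h1.symm.trans h2

/-- The embedding of the grid as a product of regular simplices. -/
noncomputable def gridPt {ι : Type} [Fintype ι] [DecidableEq ι] {m : ℕ} (s : ι → ℝ)
    (w : ι → Fin m) : EuclideanSpace ℝ (ι × Fin m) :=
  ∑ i, Real.sqrt (s i / 2) • EuclideanSpace.single (i, w i) (1 : ℝ)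

lemma geom {ι : Type} [Fintype ι] [DecidableEq ι] {m n : ℕ} (s : ι → ℝ) (hs : ∀ i, 0 ≤ s i)
    (a b : ι → Fin m) (hab : ∀ i, a i ≠ b i) (S : Fin n → Finset ι)
    (hS : ∀ j k, j ≠ k → Disjoint (S j) (S k)) (β : Fin n → ℝ) (hβ : ∀ k, 0 < β k)
    (hsum : ∀ k, ∑ i ∈ S k, s i = β k ^ 2) :
    ∃ f : EuclideanSpace ℝ (Fin n) → EuclideanSpace ℝ (ι × Fin m), Isometry f ∧
      f 0 = gridPt s a ∧ ∀ k, f (EuclideanSpace.single k (β k)) = gridPt s (mixPt a b (S k)) := by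
  let W : ι → EuclideanSpace ℝ (ι × Fin m) := fun i => Real.sqrt (s i / 2) •
    (EuclideanSpace.single (i, b i) (1 : ℝ) - EuclideanSpace.single (i, a i) (1 : ℝ))
  have hW : ∀ i j, inner ℝ (W i) (W j) = if i = j then s i else 0 := by
    intro i j
    have hin : ∀ p q : ι × Fin m, inner ℝ (EuclideanSpace.single p (1 : ℝ))
        (EuclideanSpace.single q (1 : ℝ)) = if p = q then (1 : ℝ) else 0 := by
      intro p q
      rw [EuclideanSpace.inner_single_left]
      simp [Pi.single_apply]
    simp only [W, real_inner_smul_left, real_inner_smul_right, inner_sub_left, inner_sub_right, hin,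
      Prod.mk.injEq]
    by_cases hij : i = j
    · subst hij
      have h := Real.mul_self_sqrt (show 0 ≤ s i / 2 by have := hs i; positivity)
      simp only [hab i, (hab i).symm, and_true, and_false, if_true, if_false]
      linarith
    · simp only [hij, false_and, if_false]
      ring
  have hP : ∀ u, gridPt s (mixPt a b u) = gridPt s a + ∑ i ∈ u, W i := by
    intro u
    have : ∑ i ∈ u, W i = ∑ i, if i ∈ u then W i else 0 := by simp
    rw [this, gridPt, gridPt, ← Finset.sum_add_distrib]
    refine Finset.sum_congr rfl fun i _ => ?_
    by_cases hi : i ∈ u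
    · simp [mixPt, hi, W, smul_sub]
    · simp [mixPt, hi]
  let Y : Fin n → EuclideanSpace ℝ (ι × Fin m) := fun k => (β k)⁻¹ • ∑ i ∈ S k, W i
  have hY : Orthonormal ℝ Y := by
    rw [orthonormal_iff_ite]
    intro j k
    have h1 : inner ℝ (∑ i ∈ S j, W i) (∑ i ∈ S k, W i) = if j = k then β j ^ 2 else 0 := by
      simp_rw [sum_inner, inner_sum, hW]
      split_ifs with hjk
      · subst hjk
        rw [← hsum j]
        refine Finset.sum_congr rfl fun i hi => ?_
        simp [hi]
      · refine Finset.sum_eq_zero fun i hi => Finset.sum_eq_zero fun l hl => ?_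
        rw [if_neg]
        rintro rfl
        exact Finset.disjoint_left.mp (hS j k hjk) hi hl
    simp only [Y, inner_smul_left, inner_smul_right, h1]
    split_ifs with hjk
    · subst hjk
      have := (hβ j).ne'
      simp
      field_simp
    · simp
  let B := (EuclideanSpace.basisFun (Fin n) ℝ)
  let L : EuclideanSpace ℝ (Fin n) →ₗ[ℝ] EuclideanSpace ℝ (ι × Fin m) := B.toBasis.constr ℝ Y
  have hL : ∀ k, L (EuclideanSpace.single k 1) = Y k := by
    intro k
    have : EuclideanSpace.single k (1 : ℝ) = B.toBasis k := by simp [B]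
    rw [this]
    exact Module.Basis.constr_basis _ _ _ _
  have hB : Orthonormal ℝ B.toBasis := by
    simpa using B.orthonormal
  have hLB : Orthonormal ℝ (L ∘ B.toBasis) := by
    have : L ∘ B.toBasis = Y := by
      funext k
      exact Module.Basis.constr_basis _ _ _ _
    rwa [this]
  let I := L.isometryOfOrthonormal hB hLB
  have hI : ∀ x, I x = L x := fun x => rfl
  refine ⟨fun x => gridPt s a + I x, ?_, ?_, ?_⟩
  · exact (IsometryEquiv.addLeft (gridPt s a)).isometry.comp I.isometry
  · simp
  · intro k
    have : EuclideanSpace.single k (β k) = β k • EuclideanSpace.single k (1 : ℝ) := by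
      ext i
      simp
    rw [hP]
    dsimp only
    rw [hI, this, map_smul, hL, smul_inv_smul₀ (hβ k).ne']

/-- **Right-angled simplices are canonically Ramsey.** For positive reals
`b₁, …, bₙ`, the configuration `{0, b₁e₁, …, bₙeₙ} ⊆ ℝⁿ` is canonically Ramsey. -/
theorem rightAngledSimplex_canonicallyRamsey (n : ℕ) (hn : 0 < n)
    (b : Fin n → ℝ) (hb : ∀ i, 0 < b i) :
    CanonicallyRamsey
      (insert (0 : EuclideanSpace ℝ (Fin n))
        (Set.range fun i => EuclideanSpace.single i (b i))) := by
  classical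
  obtain ⟨k, hk⟩ := exists_nat_gt (∑ i, ∑ j, b i ^ 2 / b j ^ 2)
  have hk0 : 0 < (k : ℝ) := lt_of_le_of_lt (by positivity) hk
  have hkb : ∀ i j, b i ^ 2 / k < b j ^ 2 := by
    intro i j
    have hj := hb j
    have h1 : b i ^ 2 / b j ^ 2 ≤ ∑ i, ∑ j, b i ^ 2 / b j ^ 2 := by
      refine le_trans ?_ (Finset.single_le_sum (f := fun i => ∑ j, b i ^ 2 / b j ^ 2)
        (fun i _ => by positivity) (Finset.mem_univ i))
      exact Finset.single_le_sum (f := fun j => b i ^ 2 / b j ^ 2)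
        (fun j _ => by positivity) (Finset.mem_univ j)
    have h2 := lt_of_le_of_lt h1 hk
    rw [div_lt_iff₀ (by positivity)] at h2 ⊢
    linarith
  let ι := (Fin n × Fin (k + n)) ⊕ (Fin n × Fin n)
  let s : ι → ℝ := Sum.elim (fun x => b x.1 ^ 2 / k) (fun x => b x.2 ^ 2 - b x.1 ^ 2 / k)
  have hs : ∀ i, 0 ≤ s i := by
    rintro (x | x)
    · simp only [s, Sum.elim_inl]; positivity
    · simp only [s, Sum.elim_inr]; linarith [hkb x.1 x.2]
  obtain ⟨m, hm⟩ := canonCube ι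
  let e := Fintype.equivFin (ι × Fin m)
  refine ⟨Fintype.card (ι × Fin m), ?_, ?_⟩
  · obtain ⟨a, -⟩ := hm Unit (fun _ => ())
    let i₀ : ι := Sum.inr (⟨0, hn⟩, ⟨0, hn⟩)
    exact Fintype.card_pos_iff.mpr ⟨(i₀, a i₀)⟩
  intro κ χ
  let R := LinearIsometryEquiv.piLpCongrLeft 2 ℝ ℝ e
  obtain ⟨a, c, hac, J, hJ⟩ := hm κ (fun w => χ (R (gridPt s w)))
  have ha : mixPt a c ∅ = a := by funext i; simp [mixPt]
  -- it suffices to choose the sets of coordinates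
  suffices h : ∃ S : Fin n → Finset ι, (∀ j k, j ≠ k → Disjoint (S j) (S k)) ∧
      (∀ k, ∑ i ∈ S k, s i = b k ^ 2) ∧
      ((∀ k, ∀ i ∈ S k, i ∉ J) ∨ (∀ k, ∃ i ∈ S k, i ∈ J)) by
    obtain ⟨S, hdis, hsum, hcase⟩ := h
    obtain ⟨f, hf, hf0, hfk⟩ := geom s hs a c hac S hdis b hb hsum
    refine ⟨(fun x => R (f x)) '' _, ⟨fun x => R (f x), R.isometry.comp hf, rfl⟩, ?_⟩
    -- parametrise the vertices
    have key : ∀ x ∈ insert (0 : EuclideanSpace ℝ (Fin n))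
        (Set.range fun i => EuclideanSpace.single i (b i)),
        (x = 0 ∧ f x = gridPt s (mixPt a c ∅)) ∨
        ∃ j, x = EuclideanSpace.single j (b j) ∧ f x = gridPt s (mixPt a c (S j)) := by
      rintro x (rfl | ⟨j, rfl⟩)
      · left; exact ⟨rfl, by rw [ha, hf0]⟩
      · right; exact ⟨j, rfl, hfk j⟩
    rcases hcase with hmono | hrain
    · left
      have hcol : ∀ x ∈ insert (0 : EuclideanSpace ℝ (Fin n))
        (Set.range fun i => EuclideanSpace.single i (b i)),
          χ (R (f x)) = χ (R (gridPt s (mixPt a c ∅))) := by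
        intro x hx
        rcases key x hx with ⟨-, h⟩ | ⟨j, -, h⟩
        · rw [h]
        · rw [h, hJ]
          intro i hi
          simp only [Finset.notMem_empty, iff_false]
          exact fun hij => hmono j i hij hi
      rintro _ ⟨x, hx, rfl⟩ _ ⟨y, hy, rfl⟩
      dsimp only
      rw [hcol x hx, hcol y hy]
    · right
      rintro _ ⟨x, hx, rfl⟩ _ ⟨y, hy, rfl⟩ hxy
      dsimp only at hxy ⊢
      suffices hh : x = y by rw [hh]
      rcases key x hx with ⟨hx0, h⟩ | ⟨j, hxj, h⟩ <;>
        rcases key y hy with ⟨hy0, h'⟩ | ⟨l, hyl, h'⟩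
      · rw [hx0, hy0]
      · rw [h, h', hJ] at hxy
        obtain ⟨i, hi, hiJ⟩ := hrain l
        simpa using (hxy i hiJ).mpr hi
      · rw [h, h', hJ] at hxy
        obtain ⟨i, hi, hiJ⟩ := hrain j
        simpa using (hxy i hiJ).mp hi
      · rw [h, h', hJ] at hxy
        obtain ⟨i, hi, hiJ⟩ := hrain j
        have hil := (hxy i hiJ).mp hi
        have : j = l := by
          by_contra hjl
          exact Finset.disjoint_left.mp (hdis j l hjl) hi hil
        rw [hxj, hyl, this]
  let T : Fin n → Finset (Fin (k + n)) := fun i => Finset.univ.filter fun l => Sum.inl (i, l) ∈ J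
  by_cases hcase : ∃ i, n ≤ (T i).card
  · obtain ⟨i, hi⟩ := hcase
    let g := (T i).orderEmbOfFin rfl
    let g' : Fin n → Fin (k + n) := fun j => g (Fin.castLE hi j)
    have hg' : Function.Injective g' := g.injective.comp (Fin.castLE_injective hi)
    have hgT : ∀ j, Sum.inl (i, g' j) ∈ J := by
      intro j
      have := (T i).orderEmbOfFin_mem rfl (Fin.castLE hi j)
      exact (Finset.mem_filter.mp this).2
    refine ⟨fun j => {Sum.inl (i, g' j), Sum.inr (i, j)}, ?_, ?_, Or.inr ?_⟩
    · intro j l hjl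
      have := hg'.ne hjl
      rw [Finset.disjoint_left]
      intro x hx hx'
      simp only [Finset.mem_insert, Finset.mem_singleton] at hx hx'
      rcases hx with rfl | rfl
      · rcases hx' with h | h
        · exact this (Prod.mk.inj (Sum.inl.inj h)).2
        · cases h
      · rcases hx' with h | h
        · cases h
        · exact hjl (Prod.mk.inj (Sum.inr.inj h)).2
    · intro j
      rw [Finset.sum_pair (by simp)]
      simp [s]
    · intro j
      exact ⟨Sum.inl (i, g' j), by simp, hgT j⟩
  · push Not at hcase
    have hU : ∀ i, ∃ U : Finset (Fin (k + n)), U ⊆ (T i)ᶜ ∧ U.card = k := by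
      intro i
      refine Finset.exists_subset_card_eq ?_
      rw [Finset.card_compl, Fintype.card_fin]
      have := hcase i
      omega
    choose U hU hUk using hU
    refine ⟨fun j => (U j).image fun l => Sum.inl (j, l), ?_, ?_, Or.inl ?_⟩
    · intro j l hjl
      rw [Finset.disjoint_left]
      intro x hx hx'
      simp only [Finset.mem_image] at hx hx'
      obtain ⟨p, -, rfl⟩ := hx
      obtain ⟨q, -, hq⟩ := hx'
      exact hjl (Prod.mk.inj (Sum.inl.inj hq)).1.symm
    · intro j
      rw [Finset.sum_image (by intro p _ q _ h; exact (Prod.mk.inj (Sum.inl.inj h)).2)]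
      simp only [s, Sum.elim_inl, Finset.sum_const, hUk, nsmul_eq_mul]
      field_simp
    · intro j x hx
      simp only [Finset.mem_image] at hx
      obtain ⟨p, hp, rfl⟩ := hx
      have := hU j hp
      simpa [T] using this
end
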